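/- Let G be a group and G₀ ≤ G a subgroup such that: (i) every finite subset of G is contained in some G-conjugate of G₀; and (ii) G contains an element g such that for all integers p ≠ q, every element of g^p G₀ g^{−p} commutes with every element of g^q G₀ g^{−q}. Then Hb^n(G, E) = 0 holds for all n ≥ 1 and all separable dual Banach G-modules E. -/

import Mathlib

open scoped BigOperators

/-- A cochain (function into a normed space) is bounded if its norms are uniformly bounded. -/
def IsBddCochain {G : Type*} {E : Type*} [NormedAddCommGroup E] {n : ℕ}
    (f : (Fin n → G) → E) : Prop :=
  ∃ C : ℝ, ∀ g, ‖f g‖ ≤ C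

/-- The inhomogeneous coboundary operator of bounded cohomology, for an action `π` of
`G` on `E`:
`(δf)(g₁,…,g_{n+1}) = g₁•f(g₂,…,g_{n+1}) + ∑_{i=1}^{n} (−1)^i f(g₁,…,g_i·g_{i+1},…,g_{n+1})`
`+ (−1)^{n+1} f(g₁,…,g_n)`. -/
def bddDelta {G : Type*} [Group G] {E : Type*} [NormedAddCommGroup E] [Module ℝ E]
    (π : G → E → E) (n : ℕ) (f : (Fin n → G) → E) : (Fin (n + 1) → G) → E :=
  fun g =>
    π (g 0) (f (fun j => g j.succ)) +
    (∑ i : Fin n, ((-1 : ℝ) ^ ((i : ℕ) + 1)) •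
      f (fun j => if (j : ℕ) < (i : ℕ) then g (Fin.castSucc j)
        else if (j : ℕ) = (i : ℕ) then g (Fin.castSucc j) * g j.succ
        else g j.succ)) +
    ((-1 : ℝ) ^ (n + 1)) • f (fun j => g (Fin.castSucc j))

/-- Vanishing of the bounded cohomology `Hb^n(G,E)` for all `n ≥ 1`, with respect to the
`G`-action `π` on `E`: every bounded cocycle of degree `n ≥ 1` is the coboundary of a
bounded cochain. -/
def HbVanish {G : Type*} [Group G] {E : Type*} [NormedAddCommGroup E] [Module ℝ E]
    (π : G → E → E) : Prop :=
  ∀ (n : ℕ) (f : (Fin (n + 1) → G) → E), IsBddCochain f →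
    bddDelta π (n + 1) f = 0 →
    ∃ b : (Fin n → G) → E, IsBddCochain b ∧ bddDelta π n b = f

/-- A group is boundedly acyclic if `Hb^n(G,ℝ) = 0` for all `n ≥ 1`, where `ℝ` carries
the trivial `G`-action. -/
def BoundedlyAcyclic (G : Type*) [Group G] : Prop :=
  HbVanish (G := G) (E := ℝ) (fun _ v => v)

/-- The contragredient action of `G` on the continuous dual of `F` induced by an
isometric action `ρ` of `G` on `F`: `(g • φ)(v) = φ (g⁻¹ • v)`. -/
def contragredient {G : Type*} [Group G] {F : Type*} [NormedAddCommGroup F]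
    [NormedSpace ℝ F] (ρ : G →* (F ≃ₗᵢ[ℝ] F)) : G → (F →L[ℝ] ℝ) → (F →L[ℝ] ℝ) :=
  fun g φ => φ.comp (ρ g⁻¹).toLinearIsometry.toContinuousLinearMap

/-!
Let `c` be a bounded homogeneous cocycle, `S ⊆ G` finite and `γ` such that `S` commutes with
`γ ^ q S γ ^ (-q)` for all `q ≠ 0`. For independent random elements `z q` of `S`, consider the
random walk `ξ = (∏ q, γ ^ q * z q * γ ^ (-q)) * γ ^ t`, the product being over `t ≥ q > t - N` in
this order, where the time `t` is uniform in `{0, …, N - 1}`.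
* By commutation, `w * ξ` for `w ∈ S` and `z 0 = 1` is `ξ` for `z 0 = w`.
* Up to an error of order `1 / N` coming from the two extreme times, `γ * ξ` is `ξ` for the shifted
  sequence `z`.

Applied to independent walks `ξₗ`, the prism operator gives a homotopy from `c w` to
`𝔼 c (w₀ ξ₀, …, wₙ ξₙ)`, which by the first property is `𝔼 c (ξ₀, …, ξₙ)` conditioned on the
zeroth letters being `w`. As `N → ∞` the conditioning becomes irrelevant: a weak limit of
the operators `v ↦ c(ξ)(v)` intertwines the action of `γ` with the Bernoulli shift, so the
correlation of `c(ξ)(v)` with the zeroth letters equals the correlation of `c(ξ)(γ ^ k v)` with the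
`k`-th letters. Since the limit operator is bounded into `L^∞`, Helly's theorem makes it send
weakly Cauchy sequences to almost everywhere convergent ones; separability of the dual gives a
weakly Cauchy subsequence of `γ ^ k v`, and Bessel's inequality then makes the correlation vanish.

Hence `c` is, modulo the coboundary of an equivariant cochain, constant on `S`. All bounds being
independent of `S`, weak-* compactness gives the same on all of `G`, and an invariant constant
cocycle of positive degree is a coboundary.
-/

namespace BoundedCohomology

open Filter Topology MeasureTheory

section SimplicialCochains

variable {α E : Type*} [AddCommGroup E] {n : ℕ}

/-- The prism operator `∑ i, (-1) ^ i • c (x₀, …, xᵢ, yᵢ, …, yₙ₋₁)`, where `z k = (x k, y k)`: the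
standard chain homotopy between the evaluations at `x` and at `y`. -/
def prism : {n : ℕ} → ((Fin (n + 1) → α) → E) → (Fin n → α × α) → E
  | 0, _, _ => 0
  | _ + 1, c, z =>
    c (Fin.cons (z 0).1 (Fin.cons (z 0).2 fun k => (z k.succ).2)) -
      prism (fun l => c (Fin.cons (z 0).1 l)) (Fin.tail z)

lemma prism_succ (c : (Fin (n + 2) → α) → E) (z : Fin (n + 1) → α × α) :
    prism c z = c (Fin.cons (z 0).1 (Fin.cons (z 0).2 fun k => (z k.succ).2)) -
      prism (fun l => c (Fin.cons (z 0).1 l)) (Fin.tail z) :=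
  rfl

lemma prism_sub (c c' : (Fin (n + 1) → α) → E) (z : Fin n → α × α) :
    prism (fun l => c l - c' l) z = prism c z - prism c' z := by
  induction n with
  | zero => simp [prism]
  | succ n ih =>
    simp only [prism, ih]
    abel

lemma map_prism (T : E →+ E) (c : (Fin (n + 1) → α) → E) (z : Fin n → α × α) :
    prism (fun l => T (c l)) z = T (prism c z) := by
  induction n with
  | zero => simp [prism]
  | succ n ih => simp only [prism, ih, map_sub]

lemma prism_zero (z : Fin n → α × α) : prism (0 : (Fin (n + 1) → α) → E) z = 0 :=
  map_prism (0 : E →+ E) 0 z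

lemma prism_comp_map {β : Type*} (s : β → α) (c : (Fin (n + 1) → α) → E) (z : Fin n → β × β) :
    prism c (fun k => (s (z k).1, s (z k).2)) = prism (fun l => c (s ∘ l)) z := by
  induction n with
  | zero => rfl
  | succ n ih =>
    simp only [prism, Fin.comp_cons]
    exact congrArg (_ - ·) (ih _ (Fin.tail z))

variable [Module ℝ E]

/-- The simplicial (homogeneous) coboundary operator. A homogeneous cochain of degree `n` has
`n + 1` arguments, and `bddDelta` corresponds to `coboundary` through `Fin.partialProd`. -/
def coboundary (c : (Fin n → α) → E) (l : Fin (n + 1) → α) : E :=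
  ∑ j : Fin (n + 1), (-1 : ℝ) ^ (j : ℕ) • c (fun k => l (j.succAbove k))

lemma coboundary_sub (c c' : (Fin n → α) → E) :
    coboundary (fun l => c l - c' l) = fun l => coboundary c l - coboundary c' l := by
  funext l
  simp [coboundary, smul_sub, Finset.sum_sub_distrib]

lemma coboundary_succ (c : (Fin (n + 1) → α) → E) (l : Fin (n + 2) → α) :
    coboundary c l =
      c (Fin.tail l) - coboundary (fun m => c (Fin.cons (l 0) m)) (Fin.tail l) := by
  have face (j : Fin (n + 1)) : (fun k => l (j.succ.succAbove k)) =
      Fin.cons (l 0) fun k => Fin.tail l (j.succAbove k) := by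
    funext k
    cases k using Fin.cases <;> simp [Fin.tail_def]
  simp only [coboundary, Fin.sum_univ_succ (n := n + 1), face, Fin.val_succ, pow_succ, mul_neg,
    mul_one, neg_smul, Finset.sum_neg_distrib, ← sub_eq_add_neg]
  simp [Fin.tail_def]

lemma coboundary_cons_cons (c : (Fin (n + 2) → α) → E) (x y : α) (l : Fin (n + 1) → α) :
    coboundary c (Fin.cons x (Fin.cons y l)) = c (Fin.cons y l) - c (Fin.cons x l) +
      coboundary (fun m => c (Fin.cons x (Fin.cons y m))) l := by
  simp only [coboundary_succ, Fin.cons_zero, Fin.tail_cons]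
  abel

lemma coboundary_const (k : E) (l : Fin (n + 1) → α) :
    coboundary (fun _ => k) l = if Even n then k else 0 := by
  rw [coboundary, ← Finset.sum_smul, Fin.sum_neg_one_pow]
  simp only [Nat.even_add_one]
  split_ifs <;> simp

lemma coboundary_diag (c : (Fin n → α) → E) (a : α) :
    coboundary c (fun _ => a) = if Even n then c (fun _ => a) else 0 :=
  coboundary_const (c fun _ => a) fun _ => a

lemma prism_coboundary (c : (Fin (n + 1) → α) → E) (z : Fin (n + 1) → α × α) :
    prism (coboundary c) z + coboundary (prism c) z =
      c (fun k => (z k).2) - c (fun k => (z k).1) := by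
  induction n with
  | zero =>
    have cons_eq (x : Fin 1 → α) (l : Fin 0 → α) : Fin.cons (x 0) l = x := by
      rw [Subsingleton.elim l (Fin.tail x), Fin.cons_self_tail]
    have prism_degree_zero (c : (Fin 1 → α) → E) : prism c = fun _ => 0 := rfl
    rw [prism_succ, coboundary_succ, Fin.tail_cons, cons_eq fun k => (z k).2]
    simp [prism_degree_zero, coboundary, cons_eq fun k => (z k).1]
  | succ n ih =>
    have cons_eq (x : Fin (n + 2) → α) : Fin.cons (x 0) (fun k => x k.succ) = x :=
      Fin.cons_self_tail x
    have prism_coboundary_eq : prism (coboundary c) z =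
        coboundary c (Fin.cons (z 0).1 (Fin.cons (z 0).2 fun k => (z k.succ).2)) -
          (prism c (Fin.tail z) -
            prism (coboundary fun l => c (Fin.cons (z 0).1 l)) (Fin.tail z)) := by
      rw [prism_succ, ← prism_sub]
      simp only [coboundary_succ c, Fin.cons_zero, Fin.tail_cons]
    have coboundary_prism_eq : coboundary (prism c) z = prism c (Fin.tail z) -
        (coboundary (fun l => c (Fin.cons (z 0).1 (Fin.cons (z 0).2 l))) (fun k => (z k.succ).2) -
          coboundary (prism fun l => c (Fin.cons (z 0).1 l)) (Fin.tail z)) := by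
      rw [coboundary_succ]
      simp only [prism_succ (n := n), coboundary_sub, Fin.cons_zero, Fin.cons_succ, Fin.tail_cons]
      rfl
    have tail_homotopy := ih (fun l => c (Fin.cons (z 0).1 l)) (Fin.tail z)
    simp only [Fin.tail_def, cons_eq fun k => (z k).1] at tail_homotopy
    rw [prism_coboundary_eq, coboundary_prism_eq, coboundary_cons_cons, cons_eq fun k => (z k).2,
      Fin.tail_def, eq_sub_of_add_eq tail_homotopy]
    abel

end SimplicialCochains

lemma norm_prism_le {α E : Type*} [NormedAddCommGroup E] {n : ℕ} {c : (Fin (n + 1) → α) → E}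
    {C : ℝ} (hc : ∀ l, ‖c l‖ ≤ C) (z : Fin n → α × α) : ‖prism c z‖ ≤ n * C := by
  induction n with
  | zero => simp [prism]
  | succ n ih =>
    calc ‖prism c z‖ ≤ C + n * C := norm_sub_le_of_le (hc _) (ih (fun _ => hc _) _)
      _ = (n + 1 : ℕ) * C := by push_cast; ring

section EquivariantCochains

variable {G α E : Type*} [NormedAddCommGroup E] [NormedSpace ℝ E] {n : ℕ}

/-- Equivariance of a homogeneous cochain for the diagonal action on its arguments. -/
def IsEquivariant [SMul G α] (π : G → E →L[ℝ] E) (c : (Fin n → α) → E) : Prop :=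
  ∀ (h : G) (l : Fin n → α), c (h • l) = π h (c l)

lemma IsEquivariant.coboundary [SMul G α] {π : G → E →L[ℝ] E} {c : (Fin n → α) → E}
    (hc : IsEquivariant π c) : IsEquivariant π (coboundary c) := by
  intro h l
  simp only [BoundedCohomology.coboundary, map_sum, map_smul, ← hc h]
  rfl

lemma IsEquivariant.prism [SMul G α] {π : G → E →L[ℝ] E} {c : (Fin (n + 1) → α) → E}
    (hc : IsEquivariant π c) : IsEquivariant π (prism c) := by
  intro h z
  rw [← AddMonoidHom.coe_coe (π h), ← map_prism]
  exact (prism_comp_map (h • ·) c z).trans (congrArg (BoundedCohomology.prism · z) (funext (hc h)))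

variable [Group G]

lemma bddDelta_comp_partialProd {π : G → E →L[ℝ] E} {c : (Fin (n + 1) → G) → E}
    (hc : IsEquivariant π c) (g : Fin (n + 1) → G) :
    bddDelta (fun h => π h) n (fun x => c (Fin.partialProd x)) g =
      coboundary c (Fin.partialProd g) := by
  have inner_face (i : Fin (n + 1)) : (fun k => Fin.partialProd g (i.succ.succAbove k)) =
      Fin.partialProd (Fin.contractNth i (· * ·) g) := by
    rw [Fin.partialProd_contractNth]
    rfl
  have first_face : (fun k => Fin.partialProd g (Fin.succAbove 0 k)) =
      g 0 • Fin.partialProd fun j => g j.succ := by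
    funext k
    simp [Fin.partialProd_succ', Fin.tail_def]
  rw [bddDelta, coboundary, Fin.sum_univ_succ, Fin.sum_univ_castSucc, ← add_assoc, first_face, hc,
    inner_face (Fin.last n)]
  simp only [inner_face, Fin.val_zero, pow_zero, one_smul, Fin.val_succ, Fin.val_castSucc,
    Fin.val_last]
  congr 3
  exact congrArg Fin.partialProd (funext fun j => by simp [Fin.contractNth])

/-- The equivariant homogeneous cochain corresponding to the inhomogeneous cochain `f`. -/
def homogenize (π : G → E →L[ℝ] E) (f : (Fin n → G) → E) (l : Fin (n + 1) → G) : E :=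
  π (l 0) (f fun j => (l j.castSucc)⁻¹ * l j.succ)

variable {π : G →* E →L[ℝ] E}

lemma homogenize_partialProd (f : (Fin n → G) → E) (x : Fin n → G) :
    homogenize π f (Fin.partialProd x) = f x := by
  simp [homogenize, Fin.partialProd_right_inv]

lemma isEquivariant_homogenize (f : (Fin n → G) → E) : IsEquivariant π (homogenize π f) := by
  intro h l
  simp [homogenize, mul_assoc]

lemma coboundary_homogenize_eq_zero {f : (Fin n → G) → E} (hf : bddDelta (fun h => π h) n f = 0) :
    coboundary (homogenize π f) = 0 := by
  funext l
  have h := bddDelta_comp_partialProd (isEquivariant_homogenize (π := π) f)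
    (fun i => (l i.castSucc)⁻¹ * l i.succ)
  simp only [homogenize_partialProd, hf, Pi.zero_apply] at h
  rw [← Fin.partialProd_left_inv l, (isEquivariant_homogenize f).coboundary, ← h, map_zero]
  rfl

/-- On the set `s`, the cochain `c` agrees up to the coboundary of an equivariant cochain with a
constant cochain. The common bound `B` on the primitive and on the constant makes this property
stable under weak-* limits. -/
def IsConstModCoboundaryOn (π : G → E →L[ℝ] E) (B : ℝ) (c : (Fin (n + 1) → G) → E)
    (s : Set (Fin (n + 1) → G)) : Prop :=
  ∃ (b : (Fin n → G) → E) (k : E), (∀ w, ‖b w‖ ≤ B) ∧ ‖k‖ ≤ B ∧ IsEquivariant π b ∧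
    ∀ w ∈ s, coboundary b w = k - c w

lemma exists_primitive_of_isConstModCoboundaryOn {B : ℝ} {c : (Fin (n + 2) → G) → E}
    (hc : IsEquivariant π c) (hcoc : coboundary c = 0)
    (hconst : IsConstModCoboundaryOn π B c Set.univ) :
    ∃ b : (Fin (n + 1) → G) → E, IsBddCochain b ∧ IsEquivariant π b ∧ coboundary b = c := by
  obtain ⟨b, k, hb, -, hbe, hbk⟩ := hconst
  have hk_invariant (h : G) : π h k = k := by
    have := hbe.coboundary h 1
    rw [hbk _ trivial, hbk _ trivial, hc, map_sub] at this
    exact (sub_left_injective this).symm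
  have hk_even (hn : Even n) : k = 0 := by
    have h₁ := congrFun hcoc fun _ => 1
    have h₂ := hbk (fun _ => 1) trivial
    rw [coboundary_diag, if_pos (by simpa [Nat.even_add] using hn)] at h₁
    rw [coboundary_diag, if_neg (by simpa [Nat.even_add_one] using hn), h₁] at h₂
    simpa using h₂.symm
  have hk_coboundary (w : Fin (n + 2) → G) : coboundary (fun _ => k) w = k := by
    rw [coboundary_const]
    split_ifs with hn
    · rfl
    · exact (hk_even (by simpa [Nat.even_add_one] using hn)).symm
  refine ⟨fun l => k - b l, ⟨‖k‖ + B, fun l => norm_sub_le_of_le le_rfl (hb l)⟩, fun h l => ?_, ?_⟩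
  · simp only [hbe h l, map_sub, hk_invariant]
  · funext w
    simp only [coboundary_sub, hk_coboundary, hbk w trivial, sub_sub_cancel]

lemma hbVanish_of_isConstModCoboundaryOn (hπ : ∀ g e, ‖π g e‖ ≤ ‖e‖)
    (hconst : ∀ (n : ℕ) (c : (Fin (n + 2) → G) → E), IsBddCochain c → IsEquivariant π c →
      coboundary c = 0 → ∃ B, IsConstModCoboundaryOn π B c Set.univ) :
    HbVanish fun g => π g := by
  rintro n f ⟨C, hf⟩ hcoc
  have hce := isEquivariant_homogenize (π := π) f
  have hδ := coboundary_homogenize_eq_zero hcoc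
  obtain ⟨B, hB⟩ := hconst n (homogenize π f) ⟨C, fun l => (hπ _ _).trans (hf _)⟩ hce hδ
  obtain ⟨b, ⟨D, hD⟩, hbe, hb⟩ := exists_primitive_of_isConstModCoboundaryOn hce hδ hB
  refine ⟨fun x => b (Fin.partialProd x), ⟨D, fun x => hD _⟩, funext fun x => ?_⟩
  rw [bddDelta_comp_partialProd hbe, hb, homogenize_partialProd]

end EquivariantCochains

section WeakLimits

variable {ι F : Type*} [NormedAddCommGroup F] [NormedSpace ℝ F]

lemma exists_weakStar_ultralimit (U : Ultrafilter ι) {φ : ι → StrongDual ℝ F} {C : ℝ}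
    (hφ : ∀ i, ‖φ i‖ ≤ C) :
    ∃ ψ : StrongDual ℝ F, ‖ψ‖ ≤ C ∧ ∀ v, Tendsto (fun i => φ i v) U (𝓝 (ψ v)) := by
  obtain ⟨ψ, hψ, hlim⟩ := (WeakDual.isCompact_closedBall (𝕜 := ℝ) (E := F) 0 C).ultrafilter_le_nhds
    (U.map fun i => StrongDual.toWeakDual (φ i))
    (tendsto_principal.mpr (Eventually.of_forall fun i => by simpa using hφ i))
  exact ⟨WeakDual.toStrongDual ψ, by simpa using hψ, fun v =>
    ((WeakDual.eval_continuous v).tendsto ψ).comp hlim⟩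

lemma exists_weak_ultralimit {H : Type*} [NormedAddCommGroup H] [InnerProductSpace ℝ H]
    [CompleteSpace H] (U : Ultrafilter ι) {T : ι → F →ₗ[ℝ] H} {C : ℝ}
    (hT : ∀ i v, ‖T i v‖ ≤ C * ‖v‖) :
    ∃ S : F →ₗ[ℝ] H, ∀ v ψ, Tendsto (fun i => inner ℝ ψ (T i v)) U (𝓝 (inner ℝ ψ (S v))) := by
  have vector_limit (v : F) :
      ∃ a : H, ∀ ψ, Tendsto (fun i => inner ℝ ψ (T i v)) U (𝓝 (inner ℝ ψ a)) := by
    obtain ⟨a, -, ha⟩ := exists_weakStar_ultralimit U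
      (φ := fun i => InnerProductSpace.toDual ℝ H (T i v)) (fun i => by simpa using hT i v)
    refine ⟨(InnerProductSpace.toDual ℝ H).symm a, fun ψ => ?_⟩
    simpa [real_inner_comm ψ, ← InnerProductSpace.toDual_symm_apply] using ha ψ
  choose S hS using vector_limit
  refine ⟨{ toFun := S, map_add' := fun v w => ?_, map_smul' := fun r v => ?_ }, hS⟩
  · refine ext_inner_left ℝ fun ψ => tendsto_nhds_unique (hS _ ψ) ?_
    simpa only [map_add, inner_add_right] using (hS v ψ).add (hS w ψ)
  · refine ext_inner_left ℝ fun ψ => tendsto_nhds_unique (hS _ ψ) ?_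
    simpa only [map_smul, inner_smul_right, RingHom.id_apply] using (hS v ψ).const_mul r

lemma tendsto_inner_of_pairwise_orthogonal {H : Type*} [NormedAddCommGroup H]
    [InnerProductSpace ℝ H] {φ : ι → H} {r : ℝ} (hφ : Pairwise fun j k => inner ℝ (φ j) (φ k) = 0)
    (hr : ∀ k, ‖φ k‖ = r) (x : H) : Tendsto (fun k => inner ℝ (φ k) x) cofinite (𝓝 0) := by
  rcases eq_or_ne r 0 with rfl | hr₀
  · simpa only [fun k => norm_eq_zero.mp (hr k), inner_zero_left] using tendsto_const_nhds
  have orthonormal : Orthonormal ℝ fun k => r⁻¹ • φ k := by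
    refine ⟨fun k => ?_, fun j k hjk => by simp [inner_smul_left, inner_smul_right, hφ hjk]⟩
    have hr_nonneg : 0 ≤ r := hr k ▸ norm_nonneg _
    simp [norm_smul, hr, abs_of_nonneg hr_nonneg, hr₀]
  have bessel : Tendsto (fun k => ‖inner ℝ (r⁻¹ • φ k) x‖ ^ 2) cofinite (𝓝 0) :=
    (orthonormal.inner_products_summable x).tendsto_cofinite_zero
  have normalized : Tendsto (fun k => inner ℝ (r⁻¹ • φ k) x) cofinite (𝓝 0) :=
    tendsto_zero_iff_norm_tendsto_zero.mpr (by
      simpa only [Real.sqrt_sq (norm_nonneg _), Real.sqrt_zero] using bessel.sqrt)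
  simpa [inner_smul_left, hr₀] using normalized.const_mul r

end WeakLimits

section ExtensionOfFunctionals

variable {F : Type*} [NormedAddCommGroup F] [NormedSpace ℝ F]

lemma exists_strongDual_comp_eq {M : Type*} [AddCommGroup M] [Module ℝ M] (L : M →ₗ[ℝ] F)
    (A : M →ₗ[ℝ] ℝ) {C : ℝ} (h : ∀ m, |A m| ≤ C * ‖L m‖) :
    ∃ e : StrongDual ℝ F, ∀ m, e (L m) = A m := by
  have hA : A ∈ LinearMap.range L.dualMap := by
    rw [LinearMap.range_dualMap_eq_dualAnnihilator_ker, Submodule.mem_dualAnnihilator]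
    intro m hm
    simpa [LinearMap.mem_ker.mp hm] using h m
  obtain ⟨f, rfl⟩ := hA
  obtain ⟨e, he, -⟩ := exists_extension_norm_eq (LinearMap.range L)
    ((f.domRestrict (LinearMap.range L)).mkContinuous C (by rintro ⟨_, m, rfl⟩; exact h m))
  exact ⟨e, fun m => he ⟨L m, m, rfl⟩⟩

/-- Helly's theorem. With rational coefficients the hypothesis is a countable family of conditions
when `ι` is countable, so that it can be verified almost everywhere. -/
lemma exists_strongDual_apply_eq {ι : Type*} (v : ι → F) (α : ι → ℝ) {C : ℝ}
    (h : ∀ (s : Finset ι) (q : s → ℚ),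
      |∑ i, (q i : ℝ) * α i| ≤ C * ‖∑ i, (q i : ℝ) • v i‖) :
    ∃ e : StrongDual ℝ F, ∀ i, e (v i) = α i := by
  have real_coefficients (s : Finset ι) (r : s → ℝ) :
      |∑ i, r i * α i| ≤ C * ‖∑ i, r i • v i‖ :=
    (DenseRange.piMap fun _ : s => Rat.denseRange_cast (𝕜 := ℝ)).induction_on r
      (isClosed_le (by fun_prop) (by fun_prop)) (h s)
  obtain ⟨e, he⟩ := exists_strongDual_comp_eq (Finsupp.linearCombination ℝ v)
    (Finsupp.linearCombination ℝ α) (C := C) fun r => by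
      simpa [Finsupp.linearCombination_apply, Finsupp.sum, ← Finset.sum_coe_sort r.support]
        using real_coefficients r.support fun i => r i
  exact ⟨e, fun i => by simpa using he (Finsupp.single i 1)⟩

end ExtensionOfFunctionals

section WeaklyCauchySubsequences

/-- Every bounded sequence of `F` has a weakly Cauchy subsequence. By Rosenthal's theorem a Banach
space has this property if and only if it does not contain a copy of `ℓ¹`. -/
def HasWeaklyCauchySubseq (F : Type*) [NormedAddCommGroup F] [NormedSpace ℝ F] : Prop :=
  ∀ (v : ℕ → F) (R : ℝ), (∀ k, ‖v k‖ ≤ R) →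
    ∃ σ : ℕ → ℕ, StrictMono σ ∧ ∀ e : StrongDual ℝ F, CauchySeq fun i => e (v (σ i))

lemma hasWeaklyCauchySubseq_of_separable_dual (F : Type*) [NormedAddCommGroup F]
    [NormedSpace ℝ F] [TopologicalSpace.SeparableSpace (StrongDual ℝ F)] :
    HasWeaklyCauchySubseq F := by
  intro v R hv
  obtain ⟨ξ, -, σ, hσ, hlim⟩ := WeakDual.isSeqCompact_closedBall ℝ (StrongDual ℝ F) 0 R
    (x := fun k => StrongDual.toWeakDual (NormedSpace.inclusionInDoubleDual ℝ F (v k)))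
    (fun k => by simpa using (NormedSpace.double_dual_bound ℝ F (v k)).trans (hv k))
  exact ⟨σ, hσ, fun e => (((WeakDual.eval_continuous e).tendsto ξ).comp hlim).cauchySeq⟩

end WeaklyCauchySubsequences

section OperatorsIntoLp

variable {Ω : Type*} [MeasurableSpace Ω] {μ : Measure Ω}

lemma exists_tendsto_Lp_of_ae_bounded_of_ae_cauchySeq [IsFiniteMeasure μ] {E : Type*}
    [NormedAddCommGroup E] [CompleteSpace E] {p : ENNReal} [Fact (1 ≤ p)] (hp : p ≠ ⊤)
    {f : ℕ → Lp E p μ} {M : ℝ} (hbdd : ∀ k, ∀ᵐ x ∂μ, ‖f k x‖ ≤ M)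
    (hcauchy : ∀ᵐ x ∂μ, CauchySeq fun k => f k x) :
    ∃ g : Lp E p μ, Tendsto f atTop (𝓝 g) := by
  obtain ⟨g, hgm, hg⟩ := exists_stronglyMeasurable_limit_of_tendsto_ae
    (fun k => (Lp.aestronglyMeasurable (f k)))
    (hcauchy.mono fun x hx => cauchySeq_tendsto_of_complete hx)
  have hg_mem : MemLp g p μ := by
    refine MemLp.of_bound hgm.aestronglyMeasurable M ?_
    filter_upwards [hg, ae_all_iff.mpr hbdd] with x hx hb
    exact le_of_tendsto' hx.norm hb
  have unifIntegrable : UnifIntegrable (fun k => f k) p μ := by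
    intro ε hε
    obtain ⟨δ, hδ, h⟩ := unifIntegrable_const (ι := ℕ) (p := p) (μ := μ) Fact.out hp
      (memLp_const M) hε
    refine ⟨δ, hδ, fun k s hs hμs => (eLpNorm_mono_ae_real ?_).trans (h k s hs hμs)⟩
    filter_upwards [hbdd k] with x hx
    by_cases hxs : x ∈ s <;> simp [hxs, hx]
  exact ⟨_, Lp.tendsto_Lp_of_tendsto_eLpNorm g hg_mem
    (tendsto_Lp_finite_of_tendsto_ae Fact.out hp (fun k => Lp.aestronglyMeasurable (f k)) hg_mem
      unifIntegrable hg)⟩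

variable {F : Type*} [NormedAddCommGroup F] [NormedSpace ℝ F]

/-- The operator `T` maps into `L^∞` with norm at most `C`. -/
def IsLinftyBounded (C : ℝ) (T : F →ₗ[ℝ] Lp ℝ 2 μ) : Prop :=
  ∀ v, ∀ᵐ x ∂μ, ‖T v x‖ ≤ C * ‖v‖

lemma IsLinftyBounded.norm_le [IsProbabilityMeasure μ] {C : ℝ} {T : F →ₗ[ℝ] Lp ℝ 2 μ}
    (hT : IsLinftyBounded C T) (v : F) : ‖T v‖ ≤ C * ‖v‖ := by
  have nonneg : 0 ≤ C * ‖v‖ := by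
    obtain ⟨x, hx⟩ := (hT v).exists
    exact (norm_nonneg _).trans hx
  simpa [measureUnivNNReal] using Lp.norm_le_of_ae_bound nonneg (hT v)

lemma IsLinftyBounded.of_weak_limit [IsFiniteMeasure μ] {ι : Type*} {l : Filter ι} [l.NeBot]
    {C : ℝ} {T : ι → F →ₗ[ℝ] Lp ℝ 2 μ} (hT : ∀ i, IsLinftyBounded C (T i)) {S : F →ₗ[ℝ] Lp ℝ 2 μ}
    (hlim : ∀ v ψ, Tendsto (fun i => inner ℝ ψ (T i v)) l (𝓝 (inner ℝ ψ (S v)))) :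
    IsLinftyBounded C S := by
  have integrable (f : Lp ℝ 2 μ) : Integrable f μ := (Lp.memLp f).integrable one_le_two
  have upper (v : F) : ∀ᵐ x ∂μ, S v x ≤ C * ‖v‖ := by
    refine ae_le_of_forall_setIntegral_le (integrable _) (integrable_const _) fun A hA hμA => ?_
    have hlim_A := hlim v (indicatorConstLp 2 hA hμA.ne 1)
    simp only [L2.inner_indicatorConstLp_one] at hlim_A
    refine le_of_tendsto' hlim_A fun i =>
      setIntegral_mono_ae (integrable _).integrableOn (integrable_const _).integrableOn ?_
    filter_upwards [hT i v] with x hx using (Real.le_norm_self _).trans hx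
  intro v
  filter_upwards [upper v, upper (-v), Lp.coeFn_neg (S v)] with x hx hneg hcoe
  rw [map_neg, hcoe, norm_neg] at hneg
  exact abs_le'.mpr ⟨hx, hneg⟩

lemma IsLinftyBounded.ae_exists_strongDual {ι : Type*} [Countable ι] {C : ℝ}
    {T : F →ₗ[ℝ] Lp ℝ 2 μ} (hT : IsLinftyBounded C T) (v : ι → F) :
    ∀ᵐ x ∂μ, ∃ e : StrongDual ℝ F, ∀ i, e (v i) = T (v i) x := by
  have bound : ∀ᵐ x ∂μ, ∀ (s : Finset ι) (q : s → ℚ),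
      |∑ i, (q i : ℝ) * T (v i) x| ≤ C * ‖∑ i, (q i : ℝ) • v i‖ := by
    refine ae_all_iff.mpr fun s => ae_all_iff.mpr fun q => ?_
    have coe_smul : ∀ᵐ x ∂μ, ∀ i, ((q i : ℝ) • T (v i)) x = q i * T (v i) x :=
      ae_all_iff.mpr fun i => Lp.coeFn_smul _ _
    filter_upwards [hT (∑ i, (q i : ℝ) • v i), coe_smul,
      Lp.coeFn_finsetSum Finset.univ fun i => (q i : ℝ) • T (v i)] with x hx hsmul hsum
    simpa only [map_sum, map_smul, hsum, Finset.sum_apply, hsmul, Real.norm_eq_abs] using hx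
  filter_upwards [bound] with x hx
  exact exists_strongDual_apply_eq v (fun i => T (v i) x) hx

lemma IsLinftyBounded.exists_tendsto_of_weakly_cauchy [IsFiniteMeasure μ] {C : ℝ}
    {T : F →ₗ[ℝ] Lp ℝ 2 μ} (hT : IsLinftyBounded C T) {v : ℕ → F} {R : ℝ} (hv : ∀ k, ‖v k‖ ≤ R)
    (hcauchy : ∀ e : StrongDual ℝ F, CauchySeq fun k => e (v k)) :
    ∃ g, Tendsto (fun k => T (v k)) atTop (𝓝 g) := by
  refine exists_tendsto_Lp_of_ae_bounded_of_ae_cauchySeq ENNReal.ofNat_ne_top (M := |C| * R)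
    (fun k => ?_) ?_
  · filter_upwards [hT (v k)] with x hx
    calc ‖T (v k) x‖ ≤ C * ‖v k‖ := hx
      _ ≤ |C| * R := by gcongr; exacts [le_abs_self C, hv k]
  · filter_upwards [hT.ae_exists_strongDual v] with x ⟨e, he⟩
    simpa only [he] using hcauchy e

lemma IsLinftyBounded.inner_eq_zero_of_shift_invariant [IsFiniteMeasure μ]
    (hF : HasWeaklyCauchySubseq F) (V : F →ₗᵢ[ℝ] F) {φ : ℕ → Lp ℝ 2 μ} {r : ℝ}
    (hφ : Pairwise fun j k => inner ℝ (φ j) (φ k) = 0) (hr : ∀ k, ‖φ k‖ = r)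
    {S : F →ₗ[ℝ] Lp ℝ 2 μ} {C : ℝ} (hS : IsLinftyBounded C S)
    (hshift : ∀ k v, inner ℝ (φ k) (S v) = inner ℝ (φ (k + 1)) (S (V v))) (v : F) :
    inner ℝ (φ 0) (S v) = 0 := by
  have iterate (k : ℕ) : inner ℝ (φ 0) (S v) = inner ℝ (φ k) (S (V^[k] v)) := by
    induction k with
    | zero => rfl
    | succ k ih => rw [ih, hshift, Function.iterate_succ_apply']
  have norm_iterate (k : ℕ) : ‖V^[k] v‖ ≤ ‖v‖ := by
    induction k with
    | zero => rfl
    | succ k ih => rwa [Function.iterate_succ_apply', V.norm_map]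
  obtain ⟨σ, hσ, hcauchy⟩ := hF (fun k => V^[k] v) ‖v‖ norm_iterate
  obtain ⟨g, hg⟩ := hS.exists_tendsto_of_weakly_cauchy (fun i => norm_iterate (σ i)) hcauchy
  have bessel : Tendsto (fun i => inner ℝ (φ (σ i)) g) atTop (𝓝 0) :=
    (tendsto_inner_of_pairwise_orthogonal hφ hr g).comp
      (Nat.cofinite_eq_atTop ▸ hσ.tendsto_atTop)
  have error : Tendsto (fun i => inner ℝ (φ (σ i)) (S (V^[σ i] v) - g)) atTop (𝓝 0) := by
    refine squeeze_zero_norm (fun i => (norm_inner_le_norm _ _).trans_eq (by rw [hr])) ?_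
    simpa using (tendsto_iff_norm_sub_tendsto_zero.mp hg).const_mul r
  refine tendsto_nhds_unique (l := atTop) (f := fun _ : ℕ => inner ℝ (φ 0) (S v))
    tendsto_const_nhds ?_
  simpa only [inner_sub_right, ← iterate, sub_add_cancel, add_zero] using error.add bessel

lemma tendsto_inner_zero_of_asymptotically_equivariant [IsProbabilityMeasure μ]
    (hF : HasWeaklyCauchySubseq F) (V : F →ₗᵢ[ℝ] F) (K : Lp ℝ 2 μ →ₗᵢ[ℝ] Lp ℝ 2 μ)
    {φ : ℕ → Lp ℝ 2 μ} (hφ : Pairwise fun j k => inner ℝ (φ j) (φ k) = 0)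
    (hK : ∀ k, K (φ (k + 1)) = φ k) {ι : Type*} {l : Filter ι} {T : ι → F →ₗ[ℝ] Lp ℝ 2 μ} {C : ℝ}
    (hT : ∀ i, IsLinftyBounded C (T i))
    (hshift : ∀ v, Tendsto (fun i => T i v - K (T i (V v))) l (𝓝 0)) (v : F) :
    Tendsto (fun i => inner ℝ (φ 0) (T i v)) l (𝓝 0) := by
  rw [tendsto_iff_ultrafilter]
  intro U hU
  obtain ⟨S, hS⟩ := exists_weak_ultralimit U fun i => (hT i).norm_le
  have shift_invariant (k : ℕ) (w : F) : inner ℝ (φ k) (S w) = inner ℝ (φ (k + 1)) (S (V w)) := by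
    refine tendsto_nhds_unique (hS w (φ k)) ?_
    have error : Tendsto (fun i => inner ℝ (φ k) (T i w - K (T i (V w)))) U (𝓝 0) := by
      simpa only [inner_zero_right] using tendsto_const_nhds.inner ((hshift w).mono_left hU)
    simpa only [inner_sub_right, ← hK k, K.inner_map_map, sub_add_cancel, zero_add]
      using error.add (hS (V w) (φ (k + 1)))
  have norm_φ (k : ℕ) : ‖φ k‖ = ‖φ 0‖ := by
    induction k with
    | zero => rfl
    | succ k ih => rw [← ih, ← hK k, K.norm_map]
  have hS_bdd : IsLinftyBounded C S := .of_weak_limit hT hS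
  exact hS_bdd.inner_eq_zero_of_shift_invariant hF V hφ norm_φ shift_invariant v ▸ hS v (φ 0)

end OperatorsIntoLp

section ProductMeasures

lemma measurePreserving_update_infinitePi {ι : Type*} [DecidableEq ι] {X : ι → Type*}
    [∀ i, MeasurableSpace (X i)] (μ : ∀ i, Measure (X i)) [∀ i, IsProbabilityMeasure (μ i)]
    (k : ι) :
    MeasurePreserving (fun p : (∀ i, X i) × X k => Function.update p.1 k p.2)
      ((Measure.infinitePi μ).prod (μ k)) (Measure.infinitePi μ) := by
  refine ⟨measurable_update', Measure.eq_infinitePi _ fun s t ht => ?_⟩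
  rw [Measure.map_apply measurable_update' (MeasurableSet.pi s.countable_toSet fun i _ => ht i)]
  have preimage_box : (fun p : (∀ i, X i) × X k => Function.update p.1 k p.2) ⁻¹' Set.pi s t =
      Set.pi (s.erase k) t ×ˢ {b | k ∈ s → b ∈ t k} := by
    ext ⟨x, b⟩
    simp only [Set.mem_preimage, Set.mem_pi, Set.mem_prod, Finset.mem_coe, Finset.mem_erase,
      Set.mem_ofPred_eq]
    constructor
    · exact fun h => ⟨fun i hi => by simpa [hi.1] using h i hi.2, fun hk => by simpa using h k hk⟩
    · rintro ⟨hx, hb⟩ i hi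
      obtain rfl | hik := eq_or_ne i k
      · simpa using hb hi
      · simpa [hik] using hx i ⟨hik, hi⟩
  rw [preimage_box, Measure.prod_prod, Measure.infinitePi_pi _ fun i _ => ht i]
  by_cases hk : k ∈ s
  · simp only [hk, true_imp_iff, Set.ofPred_mem_eq]
    exact Finset.prod_erase_mul s (fun i => μ i (t i)) hk
  · simp [hk]

lemma restrict_infinitePi_eq_smul_map_update {ι : Type*} [DecidableEq ι] {X : ι → Type*}
    [∀ i, MeasurableSpace (X i)] (μ : ∀ i, Measure (X i)) [∀ i, IsProbabilityMeasure (μ i)]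
    (k : ι) [MeasurableSingletonClass (X k)] (a : X k) :
    (Measure.infinitePi μ).restrict {x | x k = a} =
      μ k {a} • (Measure.infinitePi μ).map fun x => Function.update x k a := by
  have hset : MeasurableSet {x : ∀ i, X i | x k = a} :=
    measurable_pi_apply k (measurableSet_singleton a)
  have preimage_eq : (fun p : (∀ i, X i) × X k => Function.update p.1 k p.2) ⁻¹' {x | x k = a} =
      Set.univ ×ˢ {a} := by
    ext p
    simp
  conv_lhs => rw [← (measurePreserving_update_infinitePi μ k).map_eq]
  rw [Measure.restrict_map measurable_update' hset, preimage_eq, ← Measure.prod_restrict,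
    Measure.restrict_univ, Measure.restrict_singleton, Measure.prod_smul_right, Measure.prod_dirac,
    Measure.map_smul, Measure.map_map measurable_update' (by fun_prop)]
  rfl

/-- Functions on a product space that only depend on finitely many coordinates. -/
def IsCylinderFunction {ι A β : Type*} (f : (ι → A) → β) : Prop :=
  ∃ s : Finset ι, DependsOn f s

variable {ι A β : Type*}

lemma IsCylinderFunction.comp {f : (ι → A) → β} (hf : IsCylinderFunction f) {γ : Type*}
    (g : β → γ) : IsCylinderFunction fun x => g (f x) := by
  obtain ⟨s, hs⟩ := hf
  exact ⟨s, fun x y hxy => congrArg g (hs hxy)⟩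

lemma IsCylinderFunction.comp_map {f : (ι → A) → β} (hf : IsCylinderFunction f) {B : Type*}
    (g : B → A) : IsCylinderFunction fun x : ι → B => f fun i => g (x i) := by
  obtain ⟨s, hs⟩ := hf
  exact ⟨s, fun x y hxy => hs fun i hi => congrArg g (hxy i hi)⟩

lemma IsCylinderFunction.update [DecidableEq ι] {f : (ι → A) → β} (hf : IsCylinderFunction f)
    (k : ι) (a : A) : IsCylinderFunction fun x => f (Function.update x k a) := by
  obtain ⟨s, hs⟩ := hf
  refine ⟨s, fun x y hxy => hs fun i hi => ?_⟩
  obtain rfl | hik := eq_or_ne i k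
  · simp
  · simpa [hik] using hxy i hi

lemma IsCylinderFunction.pi {m : Type*} [Finite m] {f : m → (ι → A) → β}
    (hf : ∀ l, IsCylinderFunction (f l)) : IsCylinderFunction fun x l => f l x := by
  classical
  have := Fintype.ofFinite m
  choose s hs using hf
  exact ⟨Finset.univ.biUnion s, fun x y hxy => funext fun l => hs l fun i hi =>
    hxy i (Finset.mem_biUnion.mpr ⟨l, Finset.mem_univ l, hi⟩)⟩

lemma IsCylinderFunction.sum {τ : Type*} [AddCommMonoid β] (t : Finset τ) {f : τ → (ι → A) → β}
    (hf : ∀ i, IsCylinderFunction (f i)) : IsCylinderFunction fun x => ∑ i ∈ t, f i x := by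
  simp only [← Finset.sum_coe_sort t]
  exact (IsCylinderFunction.pi fun i : t => hf i).comp fun y => ∑ i, y i

lemma IsCylinderFunction.columns {G I : Type*} [Finite I] {Y : (ι → A) → G}
    (hY : IsCylinderFunction Y) (f : (I → G) → β) :
    IsCylinderFunction fun x : ι → I → A => f fun l => Y (x · l) :=
  (IsCylinderFunction.pi fun l => hY.comp_map fun a : I → A => a l).comp f

lemma IsCylinderFunction.stronglyMeasurable [Countable A] [MeasurableSpace A]
    [MeasurableSingletonClass A] [TopologicalSpace β] [Nonempty β] {f : (ι → A) → β}
    (hf : IsCylinderFunction f) : StronglyMeasurable f := by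
  obtain ⟨s, hs⟩ := hf
  obtain ⟨g, rfl⟩ := dependsOn_iff_exists_comp.mp hs
  exact (StronglyMeasurable.of_discrete (f := g)).comp_measurable (Finset.measurable_restrict s)

lemma IsCylinderFunction.integrable [Countable A] [MeasurableSpace A] [MeasurableSingletonClass A]
    [NormedAddCommGroup β] {μ : Measure (ι → A)} [IsFiniteMeasure μ] {f : (ι → A) → β} {C : ℝ}
    (hf : IsCylinderFunction f) (hC : ∀ x, ‖f x‖ ≤ C) : Integrable f μ :=
  .of_bound hf.stronglyMeasurable.aestronglyMeasurable C (ae_of_all _ hC)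

end ProductMeasures

section BernoulliShift

variable {A : Type*} [MeasurableSpace A]

/-- The two-sided Bernoulli shift, in the direction that moves the letter at `p` to `p + 1`. -/
def bernoulliShift (x : ℤ → A) : ℤ → A := fun p => x (p - 1)

lemma measurePreserving_bernoulliShift (κ : Measure A) [IsProbabilityMeasure κ] :
    MeasurePreserving bernoulliShift (Measure.infinitePi fun _ : ℤ => κ)
      (Measure.infinitePi fun _ : ℤ => κ) :=
  ⟨measurable_pi_lambda _ fun p => measurable_pi_apply (p - 1),
    Measure.map_infinitePi_infinitePi_of_inj sub_left_injective⟩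

variable [MeasurableSingletonClass A] {κ : Measure A} [IsProbabilityMeasure κ]

lemma measurableSet_setOf_apply_eq (a : A) (k : ℤ) : MeasurableSet {x : ℤ → A | x k = a} :=
  (measurableSet_singleton a).preimage (measurable_pi_apply k)

lemma measureReal_setOf_apply_eq (a : A) (k : ℤ) :
    (Measure.infinitePi fun _ : ℤ => κ).real {x | x k = a} = κ.real {a} :=
  (measurePreserving_eval_infinitePi (fun _ : ℤ => κ) k).measureReal_preimage
    (measurableSet_singleton a).nullMeasurableSet

lemma measureReal_setOf_apply_eq_inter {j k : ℤ} (hjk : j ≠ k) (a : A) :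
    (Measure.infinitePi fun _ : ℤ => κ).real ({x | x j = a} ∩ {x | x k = a}) =
      κ.real {a} * κ.real {a} := by
  have box : {x : ℤ → A | x j = a} ∩ {x | x k = a} =
      Set.pi ({j, k} : Finset ℤ) fun _ => {a} := by
    ext x
    simp
  rw [box, measureReal_def, Measure.infinitePi_pi _ fun _ _ => measurableSet_singleton a,
    Finset.prod_pair hjk, ENNReal.toReal_mul, measureReal_def]

variable (κ) in
/-- The centred indicator function of the event that the `k`-th coordinate equals `a`. -/
noncomputable def centeredIndicator (a : A) (k : ℤ) : Lp ℝ 2 (Measure.infinitePi fun _ : ℤ => κ) :=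
  indicatorConstLp 2 (measurableSet_setOf_apply_eq a k) (measure_ne_top _ _) 1 -
    κ.real {a} • indicatorConstLp 2 .univ (measure_ne_top _ _) 1

lemma pairwise_inner_centeredIndicator_eq_zero (a : A) :
    Pairwise fun j k => inner ℝ (centeredIndicator κ a j) (centeredIndicator κ a k) = 0 := by
  intro j k hjk
  simp only [centeredIndicator, inner_sub_left, inner_sub_right, real_inner_smul_left,
    real_inner_smul_right, L2.real_inner_indicatorConstLp_one_indicatorConstLp_one,
    measureReal_setOf_apply_eq_inter hjk, Set.inter_univ, Set.univ_inter,
    measureReal_setOf_apply_eq, probReal_univ]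
  ring

lemma compMeasurePreserving_centeredIndicator (a : A) (k : ℤ) :
    Lp.compMeasurePreservingₗᵢ ℝ bernoulliShift (measurePreserving_bernoulliShift κ)
      (centeredIndicator κ a (k + 1)) = centeredIndicator κ a k := by
  have preimage_eq : bernoulliShift ⁻¹' {x : ℤ → A | x (k + 1) = a} = {x | x k = a} := by
    ext x
    simp [bernoulliShift]
  simp only [centeredIndicator, map_sub, map_smul]
  congr 1
  exact (Lp.indicatorConstLp_compMeasurePreserving (measurableSet_setOf_apply_eq a (k + 1))
    (measure_ne_top _ _) 1 (measurePreserving_bernoulliShift κ)).trans (by simp only [preimage_eq])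

lemma inner_centeredIndicator_toLp {H : (ℤ → A) → ℝ} (hm : StronglyMeasurable H)
    (hH : MemLp H 2 (Measure.infinitePi fun _ : ℤ => κ)) (a : A) (k : ℤ) :
    inner ℝ (centeredIndicator κ a k) (hH.toLp H) = κ.real {a} *
      (∫ x, H (Function.update x k a) ∂Measure.infinitePi (fun _ : ℤ => κ) -
        ∫ x, H x ∂Measure.infinitePi (fun _ : ℤ => κ)) := by
  simp only [centeredIndicator, inner_sub_left, real_inner_smul_left,
    L2.inner_indicatorConstLp_one, Measure.restrict_univ]
  rw [setIntegral_congr_ae (measurableSet_setOf_apply_eq a k)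
      (hH.coeFn_toLp.mono fun x hx _ => hx), integral_congr_ae hH.coeFn_toLp,
    restrict_infinitePi_eq_smul_map_update, integral_smul_measure,
    integral_map (by fun_prop) hm.aestronglyMeasurable, mul_sub]
  rfl

variable {F : Type*} [NormedAddCommGroup F] [NormedSpace ℝ F]

/-- The evaluation operator `v ↦ (x ↦ c x v)` of a square-integrable family `c` of functionals. -/
noncomputable def evalLp {Ω : Type*} [MeasurableSpace Ω] {μ : Measure Ω} {c : Ω → StrongDual ℝ F}
    (hc : MemLp c 2 μ) : F →ₗ[ℝ] Lp ℝ 2 μ where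
  toFun v := ((ContinuousLinearMap.apply ℝ ℝ v).comp_memLp' hc).toLp
  map_add' v w := by
    rw [← MemLp.toLp_add]
    exact MemLp.toLp_congr _ _ (ae_of_all _ fun x => map_add (c x) v w)
  map_smul' r v := by
    rw [RingHom.id_apply, ← MemLp.toLp_const_smul]
    exact MemLp.toLp_congr _ _ (ae_of_all _ fun x => map_smul (c x) r v)

lemma evalLp_ae_eq {Ω : Type*} [MeasurableSpace Ω] {μ : Measure Ω} {c : Ω → StrongDual ℝ F}
    (hc : MemLp c 2 μ) (v : F) : evalLp hc v =ᵐ[μ] fun x => c x v :=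
  ((ContinuousLinearMap.apply ℝ ℝ v).comp_memLp' hc).coeFn_toLp

lemma isLinftyBounded_evalLp {Ω : Type*} [MeasurableSpace Ω] {μ : Measure Ω}
    {c : Ω → StrongDual ℝ F} (hc : MemLp c 2 μ) {C : ℝ} (hC : ∀ x, ‖c x‖ ≤ C) :
    IsLinftyBounded C (evalLp hc) := by
  intro v
  filter_upwards [evalLp_ae_eq hc v] with x hx
  exact hx ▸ (c x).le_of_opNorm_le (hC x) v

lemma tendsto_evalLp_sub_compMeasurePreserving {Ω : Type*} [MeasurableSpace Ω] {μ : Measure Ω}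
    [IsProbabilityMeasure μ] {σ : Ω → Ω} (hσ : MeasurePreserving σ μ μ) {ι : Type*} {l : Filter ι}
    {c : ι → Ω → StrongDual ℝ F} (hc : ∀ i, MemLp (c i) 2 μ) {v w : F}
    (hlim : TendstoUniformly (fun i x => c i x v - c i (σ x) w) 0 l) :
    Tendsto (fun i => evalLp (hc i) v - Lp.compMeasurePreservingₗᵢ ℝ σ hσ (evalLp (hc i) w)) l
      (𝓝 0) := by
  refine Metric.nhds_basis_closedBall.tendsto_right_iff.mpr fun ε hε => ?_
  filter_upwards [Metric.tendstoUniformly_iff.mp hlim ε hε] with i hi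
  suffices h : ∀ᵐ x ∂μ, ‖(evalLp (hc i) v -
      Lp.compMeasurePreservingₗᵢ ℝ σ hσ (evalLp (hc i) w)) x‖ ≤ ε by
    simpa [measureUnivNNReal] using Lp.norm_le_of_ae_bound hε.le h
  filter_upwards [Lp.coeFn_sub (evalLp (hc i) v)
      (Lp.compMeasurePreservingₗᵢ ℝ σ hσ (evalLp (hc i) w)), evalLp_ae_eq (hc i) v,
    hσ.quasiMeasurePreserving.ae (evalLp_ae_eq (hc i) w),
    Lp.coeFn_compMeasurePreserving (evalLp (hc i) w) hσ] with x hsub hv hw hcomp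
  rw [Function.comp_apply, hw] at hcomp
  rw [hsub, Pi.sub_apply, hv]
  change ‖c i x v - Lp.compMeasurePreserving σ hσ (evalLp (hc i) w) x‖ ≤ ε
  rw [hcomp, ← dist_eq_norm, dist_comm]
  simpa using (hi x).le

lemma tendsto_integral_update_sub_integral (hF : HasWeaklyCauchySubseq F) (V : F →ₗᵢ[ℝ] F) {a : A}
    (ha : κ.real {a} ≠ 0) {ι : Type*} {l : Filter ι} {c : ι → (ℤ → A) → StrongDual ℝ F} {C : ℝ}
    (hm : ∀ i, StronglyMeasurable (c i)) (hc : ∀ i x, ‖c i x‖ ≤ C)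
    (hshift : ∀ v, TendstoUniformly (fun i x => c i x v - c i (bernoulliShift x) (V v)) 0 l)
    (v : F) :
    Tendsto (fun i => ∫ x, c i (Function.update x 0 a) v ∂Measure.infinitePi (fun _ : ℤ => κ) -
      ∫ x, c i x v ∂Measure.infinitePi (fun _ : ℤ => κ)) l (𝓝 0) := by
  have memLp (i : ι) : MemLp (c i) 2 (Measure.infinitePi fun _ : ℤ => κ) :=
    .of_bound (hm i).aestronglyMeasurable C (ae_of_all _ (hc i))
  have correlation := tendsto_inner_zero_of_asymptotically_equivariant hF V
    (Lp.compMeasurePreservingₗᵢ ℝ bernoulliShift (measurePreserving_bernoulliShift κ))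
    (φ := fun k => centeredIndicator κ a k)
    ((pairwise_inner_centeredIndicator_eq_zero a).comp_of_injective Nat.cast_injective)
    (fun k => compMeasurePreserving_centeredIndicator a k)
    (fun i => isLinftyBounded_evalLp (memLp i) (hc i))
    (fun v => tendsto_evalLp_sub_compMeasurePreserving _ memLp (hshift v)) v
  have inner_eq (i : ι) := inner_centeredIndicator_toLp (H := fun x => c i x v)
    ((ContinuousLinearMap.apply ℝ ℝ v).continuous.comp_stronglyMeasurable (hm i))
    ((ContinuousLinearMap.apply ℝ ℝ v).comp_memLp' (memLp i)) a 0
  refine (mul_zero (κ.real {a})⁻¹ ▸ correlation.const_mul (κ.real {a})⁻¹).congr fun i => ?_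
  exact (congrArg _ (inner_eq i)).trans (inv_mul_cancel_left₀ ha _)

end BernoulliShift

section WeakStarLimits

variable {G F : Type*} [Group G] [NormedAddCommGroup F] [NormedSpace ℝ F]

/-- The contragredient action `contragredient ρ` as a monoid homomorphism into the bounded operators
on the dual. -/
noncomputable def contragredientHom (ρ : G →* (F ≃ₗᵢ[ℝ] F)) :
    G →* (StrongDual ℝ F →L[ℝ] StrongDual ℝ F) where
  toFun g := ContinuousLinearMap.precomp ℝ (ρ g⁻¹).toLinearIsometry.toContinuousLinearMap
  map_one' := by ext; simp
  map_mul' g h := by ext; simp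

lemma contragredientHom_apply_apply (ρ : G →* (F ≃ₗᵢ[ℝ] F)) (g : G) (e : StrongDual ℝ F) (v : F) :
    contragredientHom ρ g e v = e (ρ g⁻¹ v) :=
  rfl

lemma norm_contragredientHom_apply (ρ : G →* (F ≃ₗᵢ[ℝ] F)) (g : G) (e : StrongDual ℝ F) :
    ‖contragredientHom ρ g e‖ = ‖e‖ :=
  e.opNorm_comp_linearIsometryEquiv (ρ g⁻¹)

lemma tendsto_coboundary_apply {α ι : Type*} {n : ℕ} {l : Filter ι}
    {b : ι → (Fin n → α) → StrongDual ℝ F} {b' : (Fin n → α) → StrongDual ℝ F} {v : F}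
    (hb : ∀ w, Tendsto (fun i => b i w v) l (𝓝 (b' w v))) (w : Fin (n + 1) → α) :
    Tendsto (fun i => coboundary (b i) w v) l (𝓝 (coboundary b' w v)) := by
  simp only [coboundary, sum_apply, smul_apply]
  exact tendsto_finsetSum _ fun j _ => (hb _).const_smul _

lemma isConstModCoboundaryOn_of_tendsto {ρ : G →* (F ≃ₗᵢ[ℝ] F)} {n : ℕ}
    {c : (Fin (n + 1) → G) → StrongDual ℝ F} {s : Set (Fin (n + 1) → G)} {B : ℝ} {ι : Type*}
    {l : Filter ι} [l.NeBot] {b : ι → (Fin n → G) → StrongDual ℝ F} {k : ι → StrongDual ℝ F}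
    (hb : ∀ i w, ‖b i w‖ ≤ B) (hk : ∀ i, ‖k i‖ ≤ B)
    (hbe : ∀ i, IsEquivariant (contragredientHom ρ) (b i))
    (hlim : ∀ w ∈ s, ∀ v, Tendsto (fun i => (coboundary (b i) w - (k i - c w)) v) l (𝓝 0)) :
    IsConstModCoboundaryOn (contragredientHom ρ) B c s := by
  let U := Ultrafilter.of l
  choose b' hb' hb'_lim using fun w => exists_weakStar_ultralimit U fun i => hb i w
  obtain ⟨k', hk', hk'_lim⟩ := exists_weakStar_ultralimit U hk
  refine ⟨b', k', hb', hk', fun h w => ?_, fun w hw => ?_⟩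
  · ext v
    refine tendsto_nhds_unique (hb'_lim (h • w) v) ((hb'_lim w (ρ h⁻¹ v)).congr fun i => ?_)
    rw [hbe i h w, contragredientHom_apply_apply]
  · ext v
    refine sub_eq_zero.mp (tendsto_nhds_unique ?_ ((hlim w hw v).mono_left (Ultrafilter.of_le l)))
    exact (tendsto_coboundary_apply (fun w => hb'_lim w v) w).sub
      ((hk'_lim v).sub tendsto_const_nhds)

end WeakStarLimits

section RandomWalk

lemma mul_prod_map_update_one {ι G : Type*} [DecidableEq ι] [Monoid G] {f : ι → G} {p : ι} {w : G}
    (hcomm : ∀ q, q ≠ p → Commute w (f q)) {L : List ι} (hL : L.Nodup) (hp : p ∈ L) :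
    w * (L.map (Function.update f p 1)).prod = (L.map (Function.update f p w)).prod := by
  obtain ⟨L₁, L₂, rfl⟩ := List.append_of_mem hp
  have map_update (L' : List ι) (hL' : p ∉ L') (g : G) :
      L'.map (Function.update f p g) = L'.map f :=
    List.map_congr_left fun q hq => Function.update_of_ne (ne_of_mem_of_not_mem hq hL') _ _
  have hp₁ : p ∉ L₁ := fun h => List.disjoint_of_nodup_append hL h List.mem_cons_self
  have hp₂ : p ∉ L₂ := (List.nodup_cons.mp hL.of_append_right).1
  have hw : Commute w (L₁.map f).prod := by
    refine Commute.list_prod_right _ _ (List.forall_mem_map.mpr fun q hq => ?_)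
    exact hcomm q (ne_of_mem_of_not_mem hq hp₁)
  simp only [List.map_append, List.map_cons, List.prod_append, List.prod_cons, Function.update_self,
    map_update _ hp₁, map_update _ hp₂, one_mul, ← mul_assoc, hw.eq]

variable {G : Type*} [Group G]

/-- The product of the elements `γ ^ q * z q * γ ^ (-q)` over the window `t ≥ q > t - N`, followed
by `γ ^ t`. -/
def walk (γ : G) (N t : ℕ) (z : ℤ → G) : G :=
  (((List.range N).map fun i : ℕ => (t : ℤ) - i).map fun q => MulAut.conj (γ ^ q) (z q)).prod *
    γ ^ t

lemma mul_walk (γ : G) (N t : ℕ) (z : ℤ → G) :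
    γ * walk γ N t z = walk γ N (t + 1) (bernoulliShift z) := by
  have conj_factor (i : ℕ) : MulAut.conj γ (MulAut.conj (γ ^ ((t : ℤ) - i)) (z (t - i))) =
      MulAut.conj (γ ^ (((t + 1 : ℕ) : ℤ) - i)) (bernoulliShift z ((t + 1 : ℕ) - i)) := by
    have exponent : 1 + ((t : ℤ) - i) = (t + 1 : ℕ) - i := by push_cast; ring
    rw [← MulAut.mul_apply, ← map_mul, ← zpow_one_add, exponent, bernoulliShift, ← exponent,
      add_sub_cancel_left]
  simp only [walk, List.map_map, Function.comp_def, ← conj_factor]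
  rw [← Function.comp_def (MulAut.conj γ), ← List.map_map, ← map_list_prod, MulAut.conj_apply,
    pow_succ']
  group

lemma mul_walk_update_one {γ w : G} {N t : ℕ} (ht : t < N) {z : ℤ → G}
    (hcomm : ∀ q ≠ 0, Commute w (MulAut.conj (γ ^ q) (z q))) :
    w * walk γ N t (Function.update z 0 1) = walk γ N t (Function.update z 0 w) := by
  have conj_update (g : G) : (fun q => MulAut.conj (γ ^ q) (Function.update z 0 g q)) =
      Function.update (fun q => MulAut.conj (γ ^ q) (z q)) 0 g := by
    funext q
    obtain rfl | hq := eq_or_ne q 0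
    · simp
    · simp [hq]
  simp only [walk, ← mul_assoc, conj_update]
  rw [mul_prod_map_update_one hcomm]
  · exact List.nodup_range.map fun i j hij => by simpa using hij
  · exact List.mem_map.mpr ⟨t, List.mem_range.mpr ht, sub_self _⟩

lemma isCylinderFunction_walk (γ : G) (N t : ℕ) : IsCylinderFunction (walk γ N t) := by
  refine ⟨((List.range N).map fun i : ℕ => (t : ℤ) - i).toFinset, fun x y hxy => ?_⟩
  refine congrArg (·.prod * γ ^ t) (List.map_congr_left fun q hq => ?_)
  rw [hxy q (List.mem_toFinset.mpr hq)]

end RandomWalk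

section CesaroMeans

variable {E : Type*} [NormedAddCommGroup E] [NormedSpace ℝ E] {f : ℕ → E}

/-- The average of the first `N` terms of a sequence, with the junk value `0` for `N = 0`. -/
noncomputable def cesaroMean (f : ℕ → E) (N : ℕ) : E :=
  (N : ℝ)⁻¹ • ∑ t ∈ Finset.range N, f t

lemma norm_cesaroMean_le {C : ℝ} (hC : ∀ t, ‖f t‖ ≤ C) (N : ℕ) : ‖cesaroMean f N‖ ≤ C := by
  have hC₀ : 0 ≤ C := (norm_nonneg _).trans (hC 0)
  rw [cesaroMean, norm_smul, norm_inv, Real.norm_natCast]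
  refine inv_mul_le_of_le_mul₀ N.cast_nonneg hC₀ ((norm_sum_le _ _).trans ?_)
  simpa using Finset.sum_le_card_nsmul (Finset.range N) _ C fun t _ => hC t

lemma norm_cesaroMean_succ_sub_le {C : ℝ} (hC : ∀ t, ‖f t‖ ≤ C) (N : ℕ) :
    ‖cesaroMean (fun t => f (t + 1)) N - cesaroMean f N‖ ≤ (N : ℝ)⁻¹ * (C + C) := by
  rw [cesaroMean, cesaroMean, ← smul_sub, ← Finset.sum_sub_distrib, Finset.sum_range_sub, norm_smul,
    norm_inv, Real.norm_natCast]
  gcongr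
  exact norm_sub_le_of_le (hC N) (hC 0)

lemma map_cesaroMean {E' : Type*} [NormedAddCommGroup E'] [NormedSpace ℝ E'] (T : E →L[ℝ] E')
    (f : ℕ → E) (N : ℕ) : T (cesaroMean f N) = cesaroMean (fun t => T (f t)) N := by
  simp only [cesaroMean, map_smul, map_sum]

lemma cesaroMean_sub_const (f : ℕ → E) (k : E) {N : ℕ} (hN : N ≠ 0) :
    cesaroMean (fun t => f t - k) N = cesaroMean f N - k := by
  rw [cesaroMean, Finset.sum_sub_distrib, smul_sub, Finset.sum_const, Finset.card_range,
    ← Nat.cast_smul_eq_nsmul ℝ, inv_smul_smul₀ (Nat.cast_ne_zero.mpr hN)]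
  rfl

lemma integral_cesaroMean {Ω : Type*} [MeasurableSpace Ω] {μ : Measure Ω} {f : ℕ → Ω → E}
    (hf : ∀ t, Integrable (f t) μ) (N : ℕ) :
    ∫ x, cesaroMean (fun t => f t x) N ∂μ = cesaroMean (fun t => ∫ x, f t x ∂μ) N := by
  simp only [cesaroMean, integral_smul, integral_finsetSum _ fun t _ => hf t]

lemma IsCylinderFunction.cesaroMean {ι A : Type*} {f : ℕ → (ι → A) → E}
    (hf : ∀ t, IsCylinderFunction (f t)) (N : ℕ) :
    IsCylinderFunction fun x => cesaroMean (fun t => f t x) N :=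
  (IsCylinderFunction.sum (Finset.range N) hf).comp ((N : ℝ)⁻¹ • ·)

lemma coboundary_cesaroMean {α : Type*} {n : ℕ} (b : ℕ → (Fin n → α) → E) (N : ℕ)
    (w : Fin (n + 1) → α) :
    coboundary (fun l => cesaroMean (fun t => b t l) N) w =
      cesaroMean (fun t => coboundary (b t) w) N := by
  simp only [coboundary, cesaroMean, Finset.smul_sum, smul_comm (N : ℝ)⁻¹]
  exact Finset.sum_comm

lemma IsEquivariant.cesaroMean {G α : Type*} [SMul G α] {n : ℕ} {π : G → E →L[ℝ] E}
    {b : ℕ → (Fin n → α) → E} (hb : ∀ t, IsEquivariant π (b t)) (N : ℕ) :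
    IsEquivariant π fun l => cesaroMean (fun t => b t l) N := by
  intro h l
  simp only [map_cesaroMean, hb _ h l]

end CesaroMeans

section RandomHomotopy

variable {T : Type*} [MeasurableSpace T] (κ : Measure T) [IsProbabilityMeasure κ]

/-- The law of a `ℤ × I`-matrix with independent entries of law `κ`, read as a sequence of rows, so
that `bernoulliShift` moves all columns at once. -/
noncomputable abbrev columnMeasure (I : Type*) : Measure (ℤ → I → T) :=
  Measure.infinitePi fun _ => Measure.infinitePi fun _ => κ

lemma measurePreserving_columnMeasure_comp {I J : Type*} {f : I → J} (hf : f.Injective) :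
    MeasurePreserving (fun (x : ℤ → J → T) p => x p ∘ f) (columnMeasure κ J)
      (columnMeasure κ I) := by
  have row : MeasurePreserving (fun y : J → T => y ∘ f) (Measure.infinitePi fun _ => κ)
      (Measure.infinitePi fun _ => κ) :=
    ⟨by fun_prop, Measure.map_infinitePi_infinitePi_of_inj hf⟩
  refine ⟨by fun_prop, (Measure.infinitePi_map_pi _ fun _ => row.measurable).trans ?_⟩
  simp only [row.map_eq]

variable {G E : Type*} [Group G] [NormedAddCommGroup E] [NormedSpace ℝ E] {n : ℕ}

/-- The average of the prism operator over the homotopies from `w` to `(w l * Y xₗ)ₗ`, where the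
`xₗ` are independent random sequences. -/
noncomputable def randomPrism (c : (Fin (n + 1) → G) → E) (Y : (ℤ → T) → G) (w : Fin n → G) : E :=
  ∫ x, prism c (fun l => (w l, w l * Y (x · l))) ∂columnMeasure κ (Fin n)

variable {κ} {c : (Fin (n + 1) → G) → E} {C : ℝ}

lemma norm_randomPrism_le (hc : ∀ l, ‖c l‖ ≤ C) (Y : (ℤ → T) → G) (w : Fin n → G) :
    ‖randomPrism κ c Y w‖ ≤ n * C := by
  simpa [randomPrism] using norm_integral_le_of_norm_le_const (μ := columnMeasure κ (Fin n))
    (ae_of_all _ fun x => norm_prism_le hc fun l => (w l, w l * Y (x · l)))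

variable [Countable T] [MeasurableSingletonClass T] {Y : (ℤ → T) → G}

lemma isEquivariant_randomPrism [CompleteSpace E] {π : G → E →L[ℝ] E} (hce : IsEquivariant π c)
    (hc : ∀ l, ‖c l‖ ≤ C) (hY : IsCylinderFunction Y) : IsEquivariant π (randomPrism κ c Y) := by
  intro h w
  rw [randomPrism, randomPrism, ← ContinuousLinearMap.integral_comp_comm]
  · refine integral_congr_ae (ae_of_all _ fun x => ?_)
    simp only [← hce.prism h, Pi.smul_apply, smul_eq_mul, mul_assoc]
    rfl
  · exact (hY.columns fun y => prism c fun l => (w l, w l * y l)).integrable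
      fun x => norm_prism_le hc _

lemma coboundary_randomPrism [CompleteSpace E] (hcoc : coboundary c = 0) (hc : ∀ l, ‖c l‖ ≤ C)
    (hY : IsCylinderFunction Y) (w : Fin (n + 1) → G) :
    coboundary (randomPrism κ c Y) w =
      ∫ x, c (fun l => w l * Y (x · l)) ∂columnMeasure κ (Fin (n + 1)) - c w := by
  have face (j : Fin (n + 1)) : randomPrism κ c Y (fun k => w (j.succAbove k)) =
      ∫ x, prism c (fun l => (w (j.succAbove l), w (j.succAbove l) * Y (x · (j.succAbove l))))
        ∂columnMeasure κ (Fin (n + 1)) := by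
    have hj := measurePreserving_columnMeasure_comp κ (Fin.succAbove_right_injective (p := j))
    rw [randomPrism, ← hj.map_eq, integral_map hj.aemeasurable]
    · rfl
    · exact (hY.columns fun y => prism c fun l => (w (j.succAbove l), w (j.succAbove l) * y l)
        ).stronglyMeasurable.aestronglyMeasurable
  have prism_integrable (j : Fin (n + 1)) : Integrable (fun x => prism c fun l =>
      (w (j.succAbove l), w (j.succAbove l) * Y (x · (j.succAbove l))))
      (columnMeasure κ (Fin (n + 1))) :=
    (hY.columns fun y => prism c fun l =>
      (w (j.succAbove l), w (j.succAbove l) * y (j.succAbove l))).integrable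
      fun x => norm_prism_le hc _
  calc coboundary (randomPrism κ c Y) w
      = ∫ x, coboundary (prism c) (fun l => (w l, w l * Y (x · l)))
          ∂columnMeasure κ (Fin (n + 1)) := by
        simp only [coboundary, face, ← integral_smul]
        exact (integral_finsetSum _ fun j _ => (prism_integrable j).smul _).symm
    _ = ∫ x, (c (fun l => w l * Y (x · l)) - c w) ∂columnMeasure κ (Fin (n + 1)) := by
        refine integral_congr_ae (ae_of_all _ fun x => ?_)
        have homotopy := prism_coboundary c fun l => (w l, w l * Y (x · l))
        rwa [hcoc, prism_zero, zero_add] at homotopy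
    _ = _ := by
        rw [integral_sub ((hY.columns fun y => c fun l => w l * y l).integrable fun x => hc _)
          (integrable_const _)]
        simp

end RandomHomotopy

section WalkAverages

variable {G E : Type*} [Group G] [NormedAddCommGroup E] [NormedSpace ℝ E] {I : Type*}

/-- The average over the times `t < N` of a cochain evaluated at the walks driven by the columns of
a `ℤ × I`-matrix. -/
noncomputable def walkAverage (γ : G) (c : (I → G) → E) (N : ℕ) (x : ℤ → I → G) : E :=
  cesaroMean (fun t => c fun l => walk γ N t (x · l)) N

variable {γ : G} {c : (I → G) → E} {C : ℝ}

lemma norm_walkAverage_le (hc : ∀ l, ‖c l‖ ≤ C) (N : ℕ) (x : ℤ → I → G) :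
    ‖walkAverage γ c N x‖ ≤ C :=
  norm_cesaroMean_le (fun _ => hc _) N

lemma isCylinderFunction_walkAverage [Finite I] (γ : G) (c : (I → G) → E) (N : ℕ) :
    IsCylinderFunction (walkAverage γ c N) :=
  .cesaroMean (fun t => (isCylinderFunction_walk γ N t).columns c) N

lemma walkAverage_update {S : Set G} (hγ : ∀ q : ℤ, q ≠ 0 → ∀ a ∈ S, ∀ b ∈ S,
    Commute a (MulAut.conj (γ ^ q) b)) (N : ℕ) {x : ℤ → I → G} (hx : ∀ p l, x p l ∈ S)
    {w : I → G} (hw : ∀ l, w l ∈ S) :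
    walkAverage γ c N (Function.update x 0 w) =
      cesaroMean (fun t => c fun l => w l * walk γ N t (Function.update (x · l) 0 1)) N := by
  have column_update (l : I) : (fun p => Function.update x 0 w p l) =
      Function.update (x · l) 0 (w l) := by
    funext p
    obtain rfl | hp := eq_or_ne p 0 <;> simp [*]
  refine congrArg ((N : ℝ)⁻¹ • ·) (Finset.sum_congr rfl fun t ht => congrArg c (funext fun l => ?_))
  rw [column_update, mul_walk_update_one (Finset.mem_range.mp ht)]
  exact fun q hq => hγ q hq _ (hw l) _ (hx q l)

lemma norm_map_walkAverage_sub_le {n : ℕ} {c : (Fin n → G) → E} {π : G → E →L[ℝ] E}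
    (hce : IsEquivariant π c) (hc : ∀ l, ‖c l‖ ≤ C) (N : ℕ) (x : ℤ → Fin n → G) :
    ‖π γ (walkAverage γ c N x) - walkAverage γ c N (bernoulliShift x)‖ ≤ (N : ℝ)⁻¹ * (C + C) := by
  have translate (t : ℕ) : π γ (c fun l => walk γ N t (x · l)) =
      c fun l => walk γ N (t + 1) (bernoulliShift (x · l)) := by
    rw [← hce]
    exact congrArg c (funext fun l => mul_walk γ N t _)
  rw [walkAverage, map_cesaroMean]
  simp only [translate]
  exact norm_cesaroMean_succ_sub_le (f := fun t => c fun l => walk γ N t (bernoulliShift (x · l)))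
    (fun _ => hc _) N

end WalkAverages

section DecayOfCorrelations

variable {G F : Type*} [Group G] [NormedAddCommGroup F] [NormedSpace ℝ F] {ρ : G →* (F ≃ₗᵢ[ℝ] F)}
  {γ : G} {n : ℕ} {C : ℝ} {c : (Fin n → G) → StrongDual ℝ F}

lemma norm_walkAverage_apply_sub_le (hce : IsEquivariant (contragredientHom ρ) c)
    (hc : ∀ l, ‖c l‖ ≤ C) (N : ℕ) (x : ℤ → Fin n → G) (v : F) :
    ‖walkAverage γ c N x v - walkAverage γ c N (bernoulliShift x) (ρ γ v)‖ ≤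
      (N : ℝ)⁻¹ * ((C + C) * ‖v‖) := by
  have bound := (contragredientHom ρ γ (walkAverage γ c N x) -
    walkAverage γ c N (bernoulliShift x)).le_of_opNorm_le (norm_map_walkAverage_sub_le hce hc N x)
    (ρ γ v)
  have cancel : ρ γ⁻¹ (ρ γ v) = v := by
    rw [map_inv]
    exact (ρ γ).symm_apply_apply v
  rwa [sub_apply, contragredientHom_apply_apply, cancel, LinearIsometryEquiv.norm_map,
    mul_assoc] at bound

lemma tendstoUniformly_walkAverage_sub (hce : IsEquivariant (contragredientHom ρ) c)
    (hc : ∀ l, ‖c l‖ ≤ C) (v : F) :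
    TendstoUniformly (fun N x => walkAverage γ c N x v -
      walkAverage γ c N (bernoulliShift x) (ρ γ v)) 0 atTop := by
  have vanishing : Tendsto (fun N : ℕ => (N : ℝ)⁻¹ * ((C + C) * ‖v‖)) atTop (𝓝 0) := by
    simpa using (tendsto_inv_atTop_nhds_zero_nat (𝕜 := ℝ)).mul_const ((C + C) * ‖v‖)
  refine Metric.tendstoUniformly_iff.mpr fun ε hε => ?_
  filter_upwards [vanishing.eventually_lt_const hε] with N hN x
  rw [Pi.zero_apply, dist_zero_left]
  exact (norm_walkAverage_apply_sub_le hce hc N x v).trans_lt hN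

lemma tendsto_integral_walkAverage_update_sub (hF : HasWeaklyCauchySubseq F)
    (hce : IsEquivariant (contragredientHom ρ) c) (hc : ∀ l, ‖c l‖ ≤ C) {T : Type*} [Countable T]
    [MeasurableSpace T] [MeasurableSingletonClass T] {κ : Measure T} [IsProbabilityMeasure κ]
    (hκ : ∀ a, κ {a} ≠ 0) (τ : T → G) (w : Fin n → T) (v : F) :
    Tendsto (fun N =>
      (∫ x, walkAverage γ c N (fun p => τ ∘ Function.update x 0 w p) ∂columnMeasure κ (Fin n) -
        ∫ x, walkAverage γ c N (fun p => τ ∘ x p) ∂columnMeasure κ (Fin n)) v) atTop (𝓝 0) := by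
  let H (N : ℕ) (x : ℤ → Fin n → T) : StrongDual ℝ F := walkAverage γ c N fun p => τ ∘ x p
  have cylinder (N : ℕ) : IsCylinderFunction (H N) :=
    (isCylinderFunction_walkAverage γ c N).comp_map (τ ∘ ·)
  have bound (N : ℕ) (x : ℤ → Fin n → T) : ‖H N x‖ ≤ C := norm_walkAverage_le hc N _
  have shift (v : F) :
      TendstoUniformly (fun N x => H N x v - H N (bernoulliShift x) (ρ γ v)) 0 atTop :=
    (tendstoUniformly_walkAverage_sub hce hc v).comp fun (x : ℤ → Fin n → T) p => τ ∘ x p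
  have hw : (Measure.infinitePi fun _ : Fin n => κ).real {w} ≠ 0 := by
    rw [measureReal_def, Measure.infinitePi_singleton_of_fintype, ENNReal.toReal_prod]
    exact Finset.prod_ne_zero_iff.mpr fun l _ =>
      ENNReal.toReal_ne_zero.mpr ⟨hκ (w l), measure_ne_top _ _⟩
  have decay := tendsto_integral_update_sub_integral hF (ρ γ).toLinearIsometry hw
    (fun N => (cylinder N).stronglyMeasurable) bound shift v
  refine decay.congr fun N => ?_
  rw [sub_apply, ContinuousLinearMap.integral_apply
    ((cylinder N).integrable (bound N)), ContinuousLinearMap.integral_apply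
    (((cylinder N).update 0 w).integrable fun x => bound N _)]

end DecayOfCorrelations

section CommutingConjugates

variable {G F : Type*} [Group G] [NormedAddCommGroup F] [NormedSpace ℝ F] {n : ℕ} {C : ℝ}

/-- The average of the prism operators over the homotopies from `w` to `(w l * ξₗ)ₗ`, where the
`ξₗ` are independent walks at a time chosen uniformly among `t < N`, with letters of law `κ` (pushed
to `G` along `τ`) except for the letter `1` at the origin. -/
noncomputable def walkHomotopy {T E : Type*} [MeasurableSpace T] (κ : Measure T)
    [IsProbabilityMeasure κ] [NormedAddCommGroup E] [NormedSpace ℝ E] (τ : T → G) (γ : G)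
    (c : (Fin (n + 1) → G) → E) (N : ℕ) (w : Fin n → G) : E :=
  cesaroMean
    (fun t => randomPrism κ c (fun z => walk γ N t (Function.update (τ ∘ z) 0 1)) w) N

section WalkHomotopy

lemma isCylinderFunction_walk_update_one {T : Type*} (τ : T → G) (γ : G) (N t : ℕ) :
    IsCylinderFunction fun z : ℤ → T => walk γ N t (Function.update (τ ∘ z) 0 1) :=
  ((isCylinderFunction_walk γ N t).update 0 1).comp_map τ

variable {T E : Type*} [MeasurableSpace T] {κ : Measure T} [IsProbabilityMeasure κ]
  [NormedAddCommGroup E] [NormedSpace ℝ E] {τ : T → G} {γ : G} {c : (Fin (n + 1) → G) → E}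

lemma norm_walkHomotopy_le (hc : ∀ l, ‖c l‖ ≤ C) (N : ℕ) (w : Fin n → G) :
    ‖walkHomotopy κ τ γ c N w‖ ≤ n * C :=
  norm_cesaroMean_le (fun _ => norm_randomPrism_le hc _ w) N

variable [Countable T] [MeasurableSingletonClass T] [CompleteSpace E]

lemma isEquivariant_walkHomotopy {π : G → E →L[ℝ] E} (hce : IsEquivariant π c)
    (hc : ∀ l, ‖c l‖ ≤ C) (N : ℕ) : IsEquivariant π (walkHomotopy κ τ γ c N) :=
  .cesaroMean (fun t => isEquivariant_randomPrism hce hc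
    (isCylinderFunction_walk_update_one τ γ N t)) N

lemma coboundary_walkHomotopy (hcoc : coboundary c = 0) (hc : ∀ l, ‖c l‖ ≤ C)
    (hγ : ∀ q : ℤ, q ≠ 0 → ∀ a b, Commute (τ a) (MulAut.conj (γ ^ q) (τ b)))
    {N : ℕ} (hN : N ≠ 0) (w : Fin (n + 1) → T) :
    coboundary (walkHomotopy κ τ γ c N) (τ ∘ w) =
      ∫ x, walkAverage γ c N (fun p => τ ∘ Function.update x 0 w p)
        ∂columnMeasure κ (Fin (n + 1)) - c (τ ∘ w) := by
  have cylinder (t : ℕ) := isCylinderFunction_walk_update_one τ γ N t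
  have walkAverage_eq (x : ℤ → Fin (n + 1) → T) :
      walkAverage γ c N (fun p => τ ∘ Function.update x 0 w p) = cesaroMean (fun t =>
        c fun l => τ (w l) * walk γ N t (Function.update (τ ∘ (x · l)) 0 1)) N := by
    have update_comp : (fun p => τ ∘ Function.update x 0 w p) =
        Function.update (fun p => τ ∘ x p) 0 (τ ∘ w) := by
      funext p
      obtain rfl | hp := eq_or_ne p 0 <;> simp [*]
    rw [update_comp, walkAverage_update (S := Set.range τ)]
    · rfl
    · rintro q hq _ ⟨a, rfl⟩ _ ⟨b, rfl⟩
      exact hγ q hq a b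
    · exact fun p l => ⟨x p l, rfl⟩
    · exact fun l => ⟨w l, rfl⟩
  simp only [walkAverage_eq]
  rw [integral_cesaroMean fun t => ((cylinder t).columns fun y => c fun l => τ (w l) * y l
    ).integrable fun x => hc _, ← cesaroMean_sub_const _ _ hN]
  refine (coboundary_cesaroMean _ N _).trans (congrArg (cesaroMean · N) (funext fun t => ?_))
  exact coboundary_randomPrism hcoc hc (cylinder t) _

end WalkHomotopy

variable {ρ : G →* (F ≃ₗᵢ[ℝ] F)} {c : (Fin (n + 2) → G) → StrongDual ℝ F}

lemma isConstModCoboundaryOn_of_commute (hF : HasWeaklyCauchySubseq F)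
    (hce : IsEquivariant (contragredientHom ρ) c) (hcoc : coboundary c = 0) (hc : ∀ l, ‖c l‖ ≤ C)
    {S : Finset G} (hS : S.Nonempty) {γ : G}
    (hγ : ∀ q : ℤ, q ≠ 0 → ∀ a ∈ S, ∀ b ∈ S, Commute a (MulAut.conj (γ ^ q) b)) :
    IsConstModCoboundaryOn (contragredientHom ρ) ((n + 1 : ℕ) * C) c {w | ∀ l, w l ∈ S} := by
  have : Nonempty S := hS.to_subtype
  let _ : MeasurableSpace S := ⊤
  let κ : Measure S := (PMF.uniformOfFintype S).toMeasure
  have hκ (a : S) : κ {a} ≠ 0 := by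
    rw [PMF.toMeasure_apply_singleton _ _ (measurableSet_singleton a)]
    simp
  let τ : S → G := (↑)
  refine isConstModCoboundaryOn_of_tendsto (l := atTop)
    (b := walkHomotopy κ τ γ c)
    (k := fun N => ∫ x, walkAverage γ c N (fun p => τ ∘ x p) ∂columnMeasure κ (Fin (n + 2)))
    (norm_walkHomotopy_le hc) (fun N => ?_) (isEquivariant_walkHomotopy hce hc)
    fun w hw v => ?_
  · have le_C := norm_integral_le_of_norm_le_const (μ := columnMeasure κ (Fin (n + 2)))
      (ae_of_all _ fun x => norm_walkAverage_le (γ := γ) hc N fun p => τ ∘ x p)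
    rw [probReal_univ, mul_one] at le_C
    exact le_C.trans (le_mul_of_one_le_left ((norm_nonneg _).trans (hc 1)) (by simp))
  · let w' : Fin (n + 2) → S := fun l => ⟨w l, hw l⟩
    refine (tendsto_integral_walkAverage_update_sub (γ := γ) hF hce hc hκ τ w' v).congr' ?_
    filter_upwards [eventually_ne_atTop 0] with N hN
    change _ = (coboundary (walkHomotopy κ τ γ c N) (τ ∘ w') - (_ - c (τ ∘ w'))) v
    rw [coboundary_walkHomotopy hcoc hc (fun q hq a b => hγ q hq _ a.2 _ b.2) hN]
    congr 1
    abel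

lemma isConstModCoboundaryOn_univ_of_finset {c : (Fin (n + 1) → G) → StrongDual ℝ F} {B : ℝ}
    (h : ∀ S : Finset G, S.Nonempty →
      IsConstModCoboundaryOn (contragredientHom ρ) B c {w | ∀ l, w l ∈ S}) :
    IsConstModCoboundaryOn (contragredientHom ρ) B c Set.univ := by
  classical
  choose b k hb hk hbe hbk using fun S : Finset G => h (insert 1 S) (S.insert_nonempty 1)
  refine isConstModCoboundaryOn_of_tendsto (l := atTop) hb hk hbe fun w _ v => ?_
  refine tendsto_const_nhds.congr' ?_
  filter_upwards [eventually_ge_atTop (Finset.univ.image w)] with S hS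
  have hw (l : Fin (n + 1)) : w l ∈ insert 1 S :=
    Finset.mem_insert_of_mem (hS (Finset.mem_image_of_mem w (Finset.mem_univ l)))
  rw [hbk S w hw, sub_self, zero_apply]

/-- Every finite subset of `G` commutes with all its conjugates by the nonzero powers of some
element. -/
def HasCommutingConjugates (G : Type*) [Group G] : Prop :=
  ∀ S : Finset G, ∃ γ : G, ∀ q : ℤ, q ≠ 0 → ∀ a ∈ S, ∀ b ∈ S, Commute a (MulAut.conj (γ ^ q) b)

lemma isConstModCoboundaryOn_univ_of_hasCommutingConjugates (hG : HasCommutingConjugates G)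
    (hF : HasWeaklyCauchySubseq F) (hce : IsEquivariant (contragredientHom ρ) c)
    (hcoc : coboundary c = 0) (hc : ∀ l, ‖c l‖ ≤ C) :
    IsConstModCoboundaryOn (contragredientHom ρ) ((n + 1 : ℕ) * C) c Set.univ :=
  isConstModCoboundaryOn_univ_of_finset fun S hS =>
    have ⟨_, hγ⟩ := hG S
    isConstModCoboundaryOn_of_commute hF hce hcoc hc hS hγ

lemma hasCommutingConjugates_of_commute_conj_zpow {G₀ : Subgroup G}
    (hconj : ∀ S : Finset G, ∃ t : G, ∀ x ∈ S, t⁻¹ * x * t ∈ G₀) {g : G}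
    (hcomm : ∀ q : ℤ, q ≠ 0 → ∀ a ∈ G₀, ∀ b ∈ G₀, Commute a (MulAut.conj (g ^ q) b)) :
    HasCommutingConjugates G := by
  intro S
  obtain ⟨t, ht⟩ := hconj S
  refine ⟨t * g * t⁻¹, fun q hq a ha b hb => ?_⟩
  have conj_eq (x : G) : MulAut.conj t (MulAut.conj (g ^ q) (t⁻¹ * x * t)) =
      MulAut.conj ((t * g * t⁻¹) ^ q) x := by
    simp only [MulAut.conj_apply, conj_zpow]
    group
  have conj_cancel : MulAut.conj t (t⁻¹ * a * t) = a := by simp [mul_assoc]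
  have translated := (hcomm q hq _ (ht a ha) _ (ht b hb)).map (MulAut.conj t)
  rwa [conj_eq, conj_cancel] at translated

end CommutingConjugates

end BoundedCohomology

open BoundedCohomology in
theorem vanishing_of_selfSimilar_general {G F : Type*} [Group G] (hG : HasCommutingConjugates G)
    [NormedAddCommGroup F] [NormedSpace ℝ F] (hF : HasWeaklyCauchySubseq F)
    (ρ : G →* (F ≃ₗᵢ[ℝ] F)) : HbVanish (contragredient ρ) :=
  hbVanish_of_isConstModCoboundaryOn (π := contragredientHom ρ)
    (fun g e => (norm_contragredientHom_apply ρ g e).le) fun _ _ ⟨_, hc⟩ hce hcoc =>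
      ⟨_, isConstModCoboundaryOn_univ_of_hasCommutingConjugates hG hF hce hcoc hc⟩

/-- Let `G₀ ≤ G` be a subgroup such that every finite subset of `G`
is contained in some `G`-conjugate of `G₀`, and such that `G` contains an element `g`
whose conjugates of `G₀` by distinct powers commute.  Then `Hb^n(G,E) = 0` for all
`n ≥ 1` and all separable dual Banach `G`-modules `E = F*`. -/
theorem vanishing_of_selfSimilar.{u}
    {G : Type*} [Group G] (G₀ : Subgroup G)
    (hconj : ∀ S : Finset G, ∃ t : G, ∀ x ∈ S, t⁻¹ * x * t ∈ G₀)
    (g : G)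
    (hcomm : ∀ p q : ℤ, p ≠ q → ∀ a ∈ G₀, ∀ b ∈ G₀,
      (g ^ p * a * g ^ (-p)) * (g ^ q * b * g ^ (-q)) =
      (g ^ q * b * g ^ (-q)) * (g ^ p * a * g ^ (-p)))
    (F : Type u) [NormedAddCommGroup F] [NormedSpace ℝ F] [CompleteSpace F]
    (ρ : G →* (F ≃ₗᵢ[ℝ] F))
    (hsep : TopologicalSpace.SeparableSpace (F →L[ℝ] ℝ)) :
    HbVanish (contragredient ρ) :=
  vanishing_of_selfSimilar_general
    (BoundedCohomology.hasCommutingConjugates_of_commute_conj_zpow (g := g) hconj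
      fun q hq a ha b hb => by simpa [commute_iff_eq, -map_zpow] using hcomm 0 q hq.symm a ha b hb)
    (BoundedCohomology.hasWeaklyCauchySubseq_of_separable_dual F) ρ
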